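/- Let n ≥ 1 and let α > 1 be real. For every λ ∈ ℂ the series Σ_{k=0}^∞ [Γ((n+2k)/α)/Γ(n/2+k)] · λ^k / k! is absolutely convergent (the summand sequence is summable); i.e. the Wright-type series ₁Ψ₁[(n/α, 2/α); (n/2, 1); λ] defines an entire function of λ. -/

import Mathlib

lemma gamma_add_le (x s : ℝ) (hx : 0 < x) (h0 : 0 < s) (h1 : s < 1) :
    Real.Gamma (x + 2 * s) ≤ Real.Gamma x * (x * (x + 1)) ^ s := by
  have h := Real.Gamma_mul_add_mul_le_rpow_Gamma_mul_rpow_Gamma (s := x) (t := x + 2)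
    (a := 1 - s) (b := s) hx (by linarith) (by linarith) h0 (by ring)
  have e : (1 - s) * x + s * (x + 2) = x + 2 * s := by ring
  have hG := Real.Gamma_pos_of_pos hx
  have e2 : Real.Gamma (x + 2) = (x * (x + 1)) * Real.Gamma x := by
    rw [show x + 2 = (x + 1) + 1 by ring, Real.Gamma_add_one (by linarith),
      Real.Gamma_add_one hx.ne']
    ring
  rw [e, e2, Real.mul_rpow (by positivity) hG.le] at h
  refine h.trans (le_of_eq ?_)
  have e3 : Real.Gamma x ^ (1 - s) * Real.Gamma x ^ s = Real.Gamma x := by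
    rw [← Real.rpow_add hG]; simp
  calc _ = (Real.Gamma x ^ (1 - s) * Real.Gamma x ^ s) * (x * (x + 1)) ^ s := by ring
    _ = _ := by rw [e3]

/-- for `n ≥ 1` and `α > 1`, the Wright-type series
`₁Ψ₁[(n/α, 2/α); (n/2, 1); λ] = Σ_k Γ((n+2k)/α)/Γ(n/2+k) · λ^k/k!`
is absolutely convergent for every `λ ∈ ℂ`, i.e. the summand sequence is summable. -/
theorem wright_series_summable (n : ℕ) (hn : 1 ≤ n) (α : ℝ) (hα : 1 < α) (lam : ℂ) :
    Summable (fun k : ℕ =>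
      ((Real.Gamma ((n + 2 * k) / α) / Real.Gamma (n / 2 + k) : ℝ) : ℂ) *
        lam ^ k / (k.factorial : ℂ)) := by
  have hn' : (1 : ℝ) ≤ n := by exact_mod_cast hn
  have hα0 : 0 < α := by linarith
  have hs0 : 0 < α⁻¹ := by positivity
  have hs1 : α⁻¹ < 1 := inv_lt_one_of_one_lt₀ hα
  set s := α⁻¹ with hs
  set A : ℝ := (2 * (n + 1)) ^ 2 with hA
  have hA0 : 0 < A := by positivity
  set C : ℝ := A ^ s * 2 * ‖lam‖ with hC
  have ht : Filter.Tendsto (fun k : ℕ => C * (((k : ℝ) + 1) ^ 2) ^ (-(1 - s)))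
      Filter.atTop (nhds 0) := by
    have h1 : Filter.Tendsto (fun k : ℕ => (((k : ℝ) + 1) ^ 2)) Filter.atTop Filter.atTop :=
      (Filter.tendsto_pow_atTop two_ne_zero).comp
        (Filter.tendsto_atTop_add_const_right _ _ tendsto_natCast_atTop_atTop)
    have h2 := ((tendsto_rpow_neg_atTop (y := 1 - s) (by linarith)).comp h1).const_mul C
    simpa using h2
  refine summable_of_ratio_norm_eventually_le (r := 1 / 2) (by norm_num) ?_
  filter_upwards [ht.eventually (eventually_le_nhds (show (0 : ℝ) < 1 / 2 by norm_num))] with k hk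
  have hk0 : (0 : ℝ) ≤ k := Nat.cast_nonneg k
  set x : ℝ := (n + 2 * k) / α with hx
  have hx0 : 0 < x := by positivity
  have hxle : x ≤ n + 2 * k := div_le_self (by positivity) hα.le
  set y : ℝ := n / 2 + k with hy
  have hy0 : 0 < y := by positivity
  have hG := Real.Gamma_pos_of_pos hx0
  have hGy := Real.Gamma_pos_of_pos hy0
  have ex : ((n : ℝ) + 2 * ((k + 1 : ℕ) : ℝ)) / α = x + 2 * s := by
    rw [hx, hs]; push_cast; field_simp; ring
  have ey : (n : ℝ) / 2 + ((k + 1 : ℕ) : ℝ) = y + 1 := by rw [hy]; push_cast; ring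
  have hG' : 0 < Real.Gamma (x + 2 * s) := Real.Gamma_pos_of_pos (by positivity)
  rw [ex, ey, Real.Gamma_add_one hy0.ne', Nat.factorial_succ]
  simp only [norm_mul, norm_div, norm_pow, Complex.norm_real, Complex.norm_natCast,
    Real.norm_eq_abs, abs_of_pos hG, abs_of_pos hG', abs_of_pos hGy, abs_of_pos hy0,
    abs_mul, abs_div]
  have hkf : (0 : ℝ) < (k.factorial : ℝ) := by exact_mod_cast Nat.factorial_pos k
  have hb : (x * (x + 1)) ^ s ≤ A ^ s * (((k : ℝ) + 1) ^ 2) ^ s := by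
    rw [← Real.mul_rpow (by positivity) (by positivity)]
    refine Real.rpow_le_rpow (by positivity) ?_ hs0.le
    have : x + 1 ≤ 2 * (n + 1) * (k + 1) := by nlinarith
    rw [hA, ← mul_pow, sq]
    exact mul_le_mul (by linarith) this (by positivity) (by positivity)
  have hyk : ((k : ℝ) + 1) / 2 ≤ y := by rw [hy]; linarith
  have hsplit : (((k : ℝ) + 1) ^ 2) ^ (-(1 - s)) = (((k : ℝ) + 1) ^ 2) ^ s / ((k : ℝ) + 1) ^ 2 := by
    rw [show -(1 - s) = s - 1 by ring, Real.rpow_sub (by positivity), Real.rpow_one]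
  have key : (x * (x + 1)) ^ s * ‖lam‖ / (y * (k + 1)) ≤ 1 / 2 := by
    refine le_trans ?_ hk
    rw [hsplit]
    calc _ ≤ (A ^ s * (((k : ℝ) + 1) ^ 2) ^ s) * ‖lam‖ / ((((k : ℝ) + 1) / 2) * (k + 1)) := by
          gcongr
      _ = _ := by rw [hC]; field_simp
  have hGle := gamma_add_le x s hx0 hs0 hs1
  push_cast
  calc _ ≤ (Real.Gamma x * (x * (x + 1)) ^ s) / (y * Real.Gamma y) * ‖lam‖ ^ (k + 1) /
          (((k : ℝ) + 1) * k.factorial) := by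
        gcongr
    _ = ((x * (x + 1)) ^ s * ‖lam‖ / (y * (k + 1))) *
          (Real.Gamma x / Real.Gamma y * ‖lam‖ ^ k / k.factorial) := by
        rw [pow_succ]; field_simp
    _ ≤ _ := by gcongr
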